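/- Let g be a Lie algebra over a field K of characteristic zero and let R : g → g satisfy the modified classical Yang–Baxter equation [Rx,Ry] = R([Rx,y] + [x,Ry]) − [x,y] for all x, y. Set R_+ := (1/2)(R + id). Then the bilinear product x ◁ y := [R_+ x, y] defines a right post-Lie algebra structure on g: for all x, y, z, (1) x ◁ [y,z] = [x ◁ y, z] + [y, x ◁ z], and (2) [x,y] ◁ z = a_◁(y,x,z) − a_◁(x,y,z), where a_◁(x,y,z) := x ◁ (y ◁ z) − (x ◁ y) ◁ z. -/

import Mathlib

/-- `R_+ := (1/2)(R + id)`. -/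
def rPlus {K : Type*} [Field K] {L : Type*} [LieRing L] [LieAlgebra K L]
    (R : L →ₗ[K] L) : L →ₗ[K] L :=
  (1 / 2 : K) • (R + LinearMap.id)

/-- The product `x ◁ y := [R_+ x, y]` induced by a classical `r`-matrix. -/
def rTriangleLeftProd {K : Type*} [Field K] {L : Type*} [LieRing L] [LieAlgebra K L]
    (R : L →ₗ[K] L) (x y : L) : L :=
  ⁅rPlus R x, y⁆

/-- The associator of the product `x ◁ y := [R_+ x, y]`. -/
def rTriangleLeftAssociator {K : Type*} [Field K] {L : Type*} [LieRing L] [LieAlgebra K L]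
    (R : L →ₗ[K] L) (x y z : L) : L :=
  rTriangleLeftProd R x (rTriangleLeftProd R y z)
    - rTriangleLeftProd R (rTriangleLeftProd R x y) z

/-!
The modified Yang–Baxter equation with parameter `c ^ 2` makes `R + c • id` a Rota–Baxter operator
of weight `-2 * c`. Rescaling an operator rescales its weight, so `R_+ = (1/2) • (R + id)` has
weight `-1`. For a Rota–Baxter operator `P` of weight `w`, the Jacobi identity for `P x`, `P y`
and `z` says that the associator `a` of `x ◁ y := [P x, y]` satisfies
`a(x, y, z) - a(y, x, z) = w • ([x, y] ◁ z)`.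
-/

section RotaBaxter

variable {A L M : Type*} [CommRing A] [LieRing L] [LieAlgebra A L]
  [AddCommGroup M] [LieRingModule L M] {P R : L →ₗ[A] L} {w c : A}

/-- `P` is a Rota–Baxter operator of weight `w` on the Lie algebra `L`, so that
`x ◁ y := [P x, y]` is a right post-Lie product for the bracket `-w • [x, y]`. -/
def IsRotaBaxter (w : A) (P : L →ₗ[A] L) : Prop :=
  ∀ x y : L, ⁅P x, P y⁆ = P (⁅P x, y⁆ + ⁅x, P y⁆ + w • ⁅x, y⁆)

/-- `R` satisfies the modified classical Yang–Baxter equation with parameter `θ`; the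
hypothesis of the theorem is the case `θ = 1`. -/
def IsModifiedYangBaxter (θ : A) (R : L →ₗ[A] L) : Prop :=
  ∀ x y : L, ⁅R x, R y⁆ = R (⁅R x, y⁆ + ⁅x, R y⁆) - θ • ⁅x, y⁆

theorem IsRotaBaxter.smul (hP : IsRotaBaxter w P) (a : A) : IsRotaBaxter (a * w) (a • P) := by
  intro x y
  calc ⁅(a • P) x, (a • P) y⁆
      = a • a • ⁅P x, P y⁆ := by simp only [LinearMap.smul_apply, smul_lie, lie_smul]
    _ = a • P (a • (⁅P x, y⁆ + ⁅x, P y⁆ + w • ⁅x, y⁆)) := by rw [hP x y, map_smul]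
    _ = (a • P) (⁅(a • P) x, y⁆ + ⁅x, (a • P) y⁆ + (a * w) • ⁅x, y⁆) := by
      simp only [LinearMap.smul_apply, smul_lie, lie_smul, smul_add, mul_smul]

theorem IsModifiedYangBaxter.isRotaBaxter_add_smul_id (hR : IsModifiedYangBaxter (c ^ 2) R) :
    IsRotaBaxter (-2 * c) (R + c • LinearMap.id) := by
  intro x y
  have lie_sum_shift : ⁅R x + c • x, y⁆ + ⁅x, R y + c • y⁆ + (-2 * c) • ⁅x, y⁆
      = ⁅R x, y⁆ + ⁅x, R y⁆ := by
    simp only [add_lie, lie_add, smul_lie, lie_smul]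
    module
  have lie_shift_shift : ⁅R x + c • x, R y + c • y⁆
      = ⁅R x, R y⁆ + c • (⁅R x, y⁆ + ⁅x, R y⁆) + (c ^ 2) • ⁅x, y⁆ := by
    simp only [add_lie, lie_add, smul_lie, lie_smul]
    module
  simp only [LinearMap.add_apply, LinearMap.smul_apply, LinearMap.id_apply]
  rw [lie_sum_shift, lie_shift_shift, hR x y, add_right_comm, sub_add_cancel]

theorem IsRotaBaxter.associator_sub_associator (hP : IsRotaBaxter w P) (x y : L) (m : M) :
    (⁅P x, ⁅P y, m⁆⁆ - ⁅P ⁅P x, y⁆, m⁆) - (⁅P y, ⁅P x, m⁆⁆ - ⁅P ⁅P y, x⁆, m⁆)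
      = ⁅P (w • ⁅x, y⁆), m⁆ := by
  have jacobi : ⁅P x, ⁅P y, m⁆⁆ - ⁅P y, ⁅P x, m⁆⁆ = ⁅⁅P x, P y⁆, m⁆ := (lie_lie _ _ _).symm
  have rotaBaxter : ⁅⁅P x, P y⁆, m⁆
      = ⁅P ⁅P x, y⁆, m⁆ - ⁅P ⁅P y, x⁆, m⁆ + ⁅P (w • ⁅x, y⁆), m⁆ := by
    rw [hP x y, ← lie_skew x (P y), map_add, map_add, map_neg, add_lie, add_lie, neg_lie,
      ← sub_eq_add_neg]
  rw [sub_sub_sub_comm, jacobi, rotaBaxter, add_sub_cancel_left]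

end RotaBaxter

section RPlus

variable {K L : Type*} [Field K] [LieRing L] [LieAlgebra K L] {R : L →ₗ[K] L}

theorem IsModifiedYangBaxter.isRotaBaxter_rPlus [NeZero (2 : K)]
    (hR : IsModifiedYangBaxter 1 R) : IsRotaBaxter (-1) (rPlus R) := by
  have shifted : IsRotaBaxter (-2 * 1) (R + (1 : K) • LinearMap.id) :=
    IsModifiedYangBaxter.isRotaBaxter_add_smul_id (by rwa [one_pow])
  have weight : (1 / 2 : K) * (-2 * 1) = -1 := by field_simp
  simpa only [rPlus, one_smul, weight] using shifted.smul (1 / 2)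

theorem rTriangleLeftProd_lie_right (R : L →ₗ[K] L) (x y z : L) :
    rTriangleLeftProd R x ⁅y, z⁆
      = ⁅rTriangleLeftProd R x y, z⁆ + ⁅y, rTriangleLeftProd R x z⁆ :=
  leibniz_lie (rPlus R x) y z

theorem IsRotaBaxter.rTriangleLeftProd_lie_left (hR : IsRotaBaxter (-1) (rPlus R)) (x y z : L) :
    rTriangleLeftProd R ⁅x, y⁆ z
      = rTriangleLeftAssociator R y x z - rTriangleLeftAssociator R x y z :=
  calc ⁅rPlus R ⁅x, y⁆, z⁆
      = ⁅rPlus R ((-1 : K) • ⁅y, x⁆), z⁆ := by rw [neg_one_smul, lie_skew]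
    _ = rTriangleLeftAssociator R y x z - rTriangleLeftAssociator R x y z :=
      (hR.associator_sub_associator y x z).symm

end RPlus

theorem mcybe_gives_rightPostLie_general
    {K : Type*} [Field K] [NeZero (2 : K)] {L : Type*} [LieRing L] [LieAlgebra K L]
    {R : L →ₗ[K] L} (hR : IsModifiedYangBaxter 1 R) :
    (∀ x y z : L, rTriangleLeftProd R x ⁅y, z⁆
        = ⁅rTriangleLeftProd R x y, z⁆ + ⁅y, rTriangleLeftProd R x z⁆) ∧
    (∀ x y z : L, rTriangleLeftProd R ⁅x, y⁆ z
        = rTriangleLeftAssociator R y x z - rTriangleLeftAssociator R x y z) :=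
  ⟨rTriangleLeftProd_lie_right R, hR.isRotaBaxter_rPlus.rTriangleLeftProd_lie_left⟩

/-- **Statement 10.** If `R` satisfies the modified classical Yang–Baxter equation
`[Rx,Ry] = R([Rx,y] + [x,Ry]) − [x,y]`, then `x ◁ y := [R_+ x, y]`, with
`R_+ := (1/2)(R + id)`, defines a right post-Lie algebra structure on `g`:
(1) `x ◁ [y,z] = [x ◁ y, z] + [y, x ◁ z]` and
(2) `[x,y] ◁ z = a_◁(y,x,z) − a_◁(x,y,z)` for all `x, y, z`. -/
theorem mcybe_gives_rightPostLie
    (K : Type*) [Field K] [CharZero K]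
    (L : Type*) [LieRing L] [LieAlgebra K L]
    (R : L →ₗ[K] L)
    (hR : ∀ x y : L, ⁅R x, R y⁆ = R (⁅R x, y⁆ + ⁅x, R y⁆) - ⁅x, y⁆) :
    (∀ x y z : L, rTriangleLeftProd R x ⁅y, z⁆
        = ⁅rTriangleLeftProd R x y, z⁆ + ⁅y, rTriangleLeftProd R x z⁆) ∧
    (∀ x y z : L, rTriangleLeftProd R ⁅x, y⁆ z
        = rTriangleLeftAssociator R y x z - rTriangleLeftAssociator R x y z) := by
  exact mcybe_gives_rightPostLie_general fun x y => by rw [hR x y, one_smul]
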